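/- arXiv:1804.09449 — 3 statements merged into one kernel-verified Lean document; each statement's English description precedes it below -/
import Mathlib

section
/- Let G be a finite simple graph that is 4-edge-connected, and let e and f be two edges of G. Then G admits a nowhere-zero Z_2^2-flow θ such that θ(e) = θ(f). -/
open SimpleGraph

/-- A proper edge-coloring: distinct edges of `G` sharing an endpoint get different colors. -/
def IsProperEdgeColoring {V C : Type*} (G : SimpleGraph V) (c : Sym2 V → C) : Prop :=
  ∀ e ∈ G.edgeSet, ∀ f ∈ G.edgeSet, e ≠ f → (∃ v : V, v ∈ e ∧ v ∈ f) → c e ≠ c f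

/-- `S_c(v)`: the set of colors appearing on edges incident to `v`. -/
def colorSet {V C : Type*} (G : SimpleGraph V) (c : Sym2 V → C) (v : V) : Set C :=
  c '' G.incidenceSet v

/-- The edge `uv` is poor: exactly 3 colors appear around its endpoints. -/
def IsPoorAt {V C : Type*} (G : SimpleGraph V) (c : Sym2 V → C) (u v : V) : Prop :=
  (colorSet G c u ∪ colorSet G c v).ncard = 3

/-- The edge `uv` is rich: exactly 5 colors appear around its endpoints. -/
def IsRichAt {V C : Type*} (G : SimpleGraph V) (c : Sym2 V → C) (u v : V) : Prop :=
  (colorSet G c u ∪ colorSet G c v).ncard = 5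

/-- A normal edge-coloring: a proper edge-coloring in which every edge is poor or rich. -/
def IsNormalEdgeColoring {V C : Type*} (G : SimpleGraph V) (c : Sym2 V → C) : Prop :=
  IsProperEdgeColoring G c ∧
    ∀ u v : V, G.Adj u v → IsPoorAt G c u v ∨ IsRichAt G c u v

/-- A nowhere-zero flow with values in an additive group `M` (all elements self-inverse in our
applications): nonzero on every edge, and at every vertex the values on incident edges sum to 0. -/
def IsNowhereZeroFlow {V M : Type*} [AddCommMonoid M] (G : SimpleGraph V)
    (θ : Sym2 V → M) : Prop :=
  (∀ e ∈ G.edgeSet, θ e ≠ 0) ∧ ∀ v : V, ∑ᶠ e ∈ G.incidenceSet v, θ e = 0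

/-- `G` is `k`-edge-connected: connected, and still connected after deleting any set of
fewer than `k` edges. -/
def EdgeConnGe {V : Type*} (G : SimpleGraph V) (k : ℕ) : Prop :=
  G.Connected ∧ ∀ s : Set (Sym2 V), s.ncard < k → (G.deleteEdges s).Connected

/-- `G` is cubic: every vertex has degree 3. -/
def IsCubic {V : Type*} (G : SimpleGraph V) : Prop :=
  ∀ v : V, (G.neighborSet v).ncard = 3

/-- `G` is bridgeless: no edge is a bridge. -/
def Bridgeless {V : Type*} (G : SimpleGraph V) : Prop :=
  ∀ e ∈ G.edgeSet, ¬ G.IsBridge e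

/-
Let `T₁`, `T₂` be edge-disjoint spanning trees of `G` avoiding `e` and `f`. The edges outside `Tᵢ`
can be completed by edges of `Tᵢ` to an even subgraph, whose indicator `θᵢ` is a `Z₂`-flow equal
to `1` off `Tᵢ`. No edge lies in both trees, so `(θ₁, θ₂)` is nowhere zero, and it is `(1, 1)` at
`e` and `f`.

Such trees exist by Nash-Williams–Tutte: in a partition of `V` into `q ≥ 2` classes every class
sends out at least `4` edges, so at least `2q` edges cross, and `2q - 2` of them survive the
deletion of `e` and `f`. Nash-Williams–Tutte is in turn the case of edge boundaries over `Z₂` of the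
base packing theorem of Edmonds for vectors. There, color as many vectors as possible with `k`
colors so that every color class is independent, and let `A` be the set of vectors that can be made
uncolored by successive exchanges. The part of each color class inside `A` spans `A`, so if `k ·
rank ≤ k · rank A + |Aᶜ|`, counting colored vectors shows that every color class is a base.
-/

section BasePacking

open Function Submodule

theorem mem_span_image_setOf_notMem_span_image_diff {R M ι : Type*} [Semiring R] [AddCommMonoid M]
    [Module R M] {w : ι → M} {s : Set ι} (hs : LinearIndepOn R w s) {m : M}
    (hm : m ∈ span R (w '' s)) :
    m ∈ span R (w '' {y ∈ s | m ∉ span R (w '' (s \ {y}))}) := by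
  obtain ⟨l, hls, rfl⟩ := (Finsupp.mem_span_image_iff_linearCombination R).1 hm
  refine (Finsupp.mem_span_image_iff_linearCombination R).2
    ⟨l, fun y hy ↦ ⟨hls hy, fun hmem ↦ ?_⟩, rfl⟩
  obtain ⟨l', hl's, hl'⟩ := (Finsupp.mem_span_image_iff_linearCombination R).1 hmem
  obtain rfl : l' = l := linearIndepOn_iffₛ.1 hs l' (fun z hz ↦ (hl's hz).1) l hls hl'
  exact (hl's hy).2 rfl

variable {ι κ K M : Type*}

/-- The elements receiving color `b` under a partial coloring, `none` meaning "uncolored". -/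
def colorClass (c : ι → Option κ) (b : κ) : Set ι := c ⁻¹' {some b}

/-- The elements left without a color by a partial coloring. -/
def uncolored (c : ι → Option κ) : Set ι := c ⁻¹' {none}

theorem pairwise_disjoint_colorClass (c : ι → Option κ) :
    Pairwise (Disjoint on colorClass c) := fun _ _ hne ↦
  Disjoint.preimage c (Set.disjoint_singleton.2 (by simpa using hne))

theorem compl_uncolored (c : ι → Option κ) : (uncolored c)ᶜ = ⋃ b, colorClass c b := by
  ext x
  simp [uncolored, colorClass, Option.ne_none_iff_exists']

section Update

variable [DecidableEq ι] {c : ι → Option κ} {x y : ι} {b : κ}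

theorem colorClass_update_none (c : ι → Option κ) (y : ι) (b : κ) :
    colorClass (update c y none) b = colorClass c b \ {y} := by
  ext z
  by_cases hz : z = y <;> simp [colorClass, hz]

theorem colorClass_update_some_self (c : ι → Option κ) (x : ι) (b : κ) :
    colorClass (update c x (some b)) b = insert x (colorClass c b) := by
  ext z
  by_cases hz : z = x <;> simp [colorClass, hz]

theorem colorClass_update_some_of_ne (hx : x ∈ uncolored c) {b' : κ} (hb : b' ≠ b) :
    colorClass (update c x (some b)) b' = colorClass c b' := by
  ext z
  by_cases hz : z = x
  · simp_all [colorClass, uncolored, eq_comm]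
  · simp [colorClass, hz]

theorem uncolored_update_none (c : ι → Option κ) (y : ι) :
    uncolored (update c y none) = insert y (uncolored c) := by
  ext z
  by_cases hz : z = y <;> simp [uncolored, hz]

theorem uncolored_update_some (c : ι → Option κ) (x : ι) (b : κ) :
    uncolored (update c x (some b)) = uncolored c \ {x} := by
  ext z
  by_cases hz : z = x <;> simp [uncolored, hz]

end Update

variable [DivisionRing K] [AddCommGroup M] [Module K M] {w : ι → M} {c c' c₀ : ι → Option κ}
  {x y : ι} {b : κ}

variable (K) in
/-- A partial coloring of the vectors `w` is independent if each color class is linearly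
independent. -/
def IsIndepColoring (w : ι → M) (c : ι → Option κ) : Prop :=
  ∀ b, LinearIndepOn K w (colorClass c b)

variable (K) in
/-- An independent partial coloring is optimal if it leaves as few vectors uncolored as
possible. -/
def IsOptimalColoring (w : ι → M) (c : ι → Option κ) : Prop :=
  MinimalFor (IsIndepColoring K w) (fun c ↦ (uncolored c).ncard) c

variable (κ K) in
theorem exists_isOptimalColoring (w : ι → M) : ∃ c : ι → Option κ, IsOptimalColoring K w c :=
  exists_minimalFor_of_wellFoundedLT _ _ ⟨fun _ ↦ none, fun _ ↦ by simp [colorClass]⟩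

variable (K) in
/-- One exchange step: the uncolored element `x` takes over the color of `y`, and `y` becomes
uncolored, where the color class without `y` does not span `x`. -/
def Exchange [DecidableEq ι] (w : ι → M) (c c' : ι → Option κ) : Prop :=
  ∃ x y b, x ∈ uncolored c ∧ y ∈ colorClass c b ∧ w x ∉ span K (w '' (colorClass c b \ {y})) ∧
    c' = update (update c y none) x (some b)

variable (K) in
/-- The elements that can be made uncolored by a sequence of exchanges starting from `c₀`. -/
def exchangeable [DecidableEq ι] (w : ι → M) (c₀ : ι → Option κ) : Set ι :=
  {x | ∃ c, Relation.ReflTransGen (Exchange K w) c₀ c ∧ x ∈ uncolored c}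

theorem ne_of_mem_uncolored_of_mem_colorClass (hx : x ∈ uncolored c) (hy : y ∈ colorClass c b) :
    x ≠ y := by
  rintro rfl
  simp_all [uncolored, colorClass]

section Coloring

variable [DecidableEq ι]

theorem IsIndepColoring.update_none (hc : IsIndepColoring K w c) (y : ι) :
    IsIndepColoring K w (update c y none) := fun b ↦ by
  rw [colorClass_update_none]
  exact (hc b).mono Set.sdiff_subset

theorem IsIndepColoring.update_some (hc : IsIndepColoring K w c) (hx : x ∈ uncolored c)
    (hxb : w x ∉ span K (w '' colorClass c b)) : IsIndepColoring K w (update c x (some b)) := by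
  intro b'
  obtain rfl | hb := eq_or_ne b' b
  · rw [colorClass_update_some_self]
    exact (hc b').insert hxb
  · rw [colorClass_update_some_of_ne hx hb]
    exact hc b'

theorem IsIndepColoring.exchange (hc : IsIndepColoring K w c) (h : Exchange K w c c') :
    IsIndepColoring K w c' := by
  obtain ⟨x, y, b, hx, -, hxy, rfl⟩ := h
  refine (hc.update_none y).update_some ?_ (by rwa [colorClass_update_none])
  rw [uncolored_update_none]
  exact Set.mem_insert_of_mem y hx

theorem Exchange.ncard_uncolored_eq (h : Exchange K w c c') :
    (uncolored c').ncard = (uncolored c).ncard := by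
  obtain ⟨x, y, b, hx, hy, -, rfl⟩ := h
  rw [uncolored_update_some, uncolored_update_none]
  exact Set.ncard_exchange' (fun hy' ↦ ne_of_mem_uncolored_of_mem_colorClass hy' hy rfl) hx

theorem IsOptimalColoring.exchange (hc : IsOptimalColoring K w c) (h : Exchange K w c c') :
    IsOptimalColoring K w c' :=
  ⟨hc.1.exchange h, fun _ hc'' hle ↦
    h.ncard_uncolored_eq.trans_le (hc.2 hc'' (hle.trans_eq h.ncard_uncolored_eq))⟩

theorem IsOptimalColoring.exchanges (hc : IsOptimalColoring K w c₀)
    (h : Relation.ReflTransGen (Exchange K w) c₀ c) : IsOptimalColoring K w c := by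
  induction h with
  | refl => exact hc
  | tail _ hstep ih => exact ih.exchange hstep

end Coloring

theorem IsOptimalColoring.mem_span_colorClass [Finite ι] (hc : IsOptimalColoring K w c)
    (hx : x ∈ uncolored c) (b : κ) : w x ∈ span K (w '' colorClass c b) := by
  classical
  by_contra hxb
  have hlt : (uncolored (update c x (some b))).ncard < (uncolored c).ncard := by
    rw [uncolored_update_some]
    exact Set.ncard_sdiff_singleton_lt_of_mem hx
  exact (hc.2 (hc.1.update_some hx hxb) hlt.le).not_gt hlt

section Exchange

variable [DecidableEq ι]

theorem IsOptimalColoring.mem_span_colorClass_inter_exchangeable [Finite ι]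
    (hc₀ : IsOptimalColoring K w c₀) (hc : Relation.ReflTransGen (Exchange K w) c₀ c)
    (hx : x ∈ uncolored c) (b : κ) :
    w x ∈ span K (w '' (colorClass c b ∩ exchangeable K w c₀)) := by
  have hopt := hc₀.exchanges hc
  refine span_mono (Set.image_mono ?_) (mem_span_image_setOf_notMem_span_image_diff (hopt.1 b)
    (hopt.mem_span_colorClass hx b))
  rintro y ⟨hy, hxy⟩
  refine ⟨hy, _, hc.tail ⟨x, y, b, hx, hy, hxy, rfl⟩, ?_⟩
  rw [uncolored_update_some, uncolored_update_none]
  exact ⟨Set.mem_insert y _, (ne_of_mem_uncolored_of_mem_colorClass hx hy).symm⟩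

theorem IsOptimalColoring.span_colorClass_inter_exchangeable_le [Finite ι]
    (hc₀ : IsOptimalColoring K w c₀) (hc : Relation.ReflTransGen (Exchange K w) c₀ c) (b : κ) :
    span K (w '' (colorClass c b ∩ exchangeable K w c₀)) ≤
      span K (w '' (colorClass c₀ b ∩ exchangeable K w c₀)) := by
  induction hc with
  | refl => exact le_rfl
  | @tail c _ hc hstep ih =>
    refine le_trans (span_le.2 ?_) ih
    obtain ⟨x, y, b', hx, -, -, rfl⟩ := hstep
    rintro _ ⟨z, ⟨hz, hzA⟩, rfl⟩
    obtain rfl | hzx := eq_or_ne z x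
    · exact hc₀.mem_span_colorClass_inter_exchangeable hc hx b
    · refine subset_span ⟨z, ⟨?_, hzA⟩, rfl⟩
      have hzy : z ∈ colorClass (update c y none) b := by
        simpa [colorClass, update_of_ne hzx] using hz
      rw [colorClass_update_none] at hzy
      exact hzy.1

theorem IsOptimalColoring.span_exchangeable_le [Finite ι] (hc₀ : IsOptimalColoring K w c₀)
    (b : κ) : span K (w '' exchangeable K w c₀) ≤
      span K (w '' (colorClass c₀ b ∩ exchangeable K w c₀)) := by
  rw [span_le]
  rintro _ ⟨x, ⟨c, hc, hx⟩, rfl⟩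
  exact hc₀.span_colorClass_inter_exchangeable_le hc b
    (hc₀.mem_span_colorClass_inter_exchangeable hc hx b)

theorem uncolored_subset_exchangeable : uncolored c₀ ⊆ exchangeable K w c₀ :=
  fun _ hx ↦ ⟨c₀, .refl, hx⟩

end Exchange

theorem finrank_span_image_le_ncard (w : ι → M) {s : Set ι} (hs : s.Finite) :
    Module.finrank K (span K (w '' s)) ≤ s.ncard := by
  have := (hs.image w).fintype
  calc Module.finrank K (span K (w '' s)) ≤ (w '' s).toFinset.card := finrank_span_le_card _
    _ = (w '' s).ncard := (Set.ncard_eq_toFinset_card' _).symm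
    _ ≤ s.ncard := Set.ncard_image_le hs

theorem finrank_span_image_eq_ncard {s : Set ι} (hs : LinearIndepOn K w s) (hfin : s.Finite) :
    Module.finrank K (span K (w '' s)) = s.ncard := by
  have := hfin.fintype
  rw [Set.image_eq_range, finrank_span_eq_card hs, ← Nat.card_eq_fintype_card,
    Nat.card_coe_set_eq]

variable [Finite ι] [Fintype κ]

theorem card_mul_finrank_add_ncard_compl_le_sum_ncard_colorClass {A : Set ι}
    (hA : uncolored c ⊆ A)
    (hspan : ∀ b, span K (w '' A) ≤ span K (w '' (colorClass c b ∩ A))) :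
    Fintype.card κ * Module.finrank K (span K (w '' A)) + Aᶜ.ncard ≤
      ∑ b, (colorClass c b).ncard := by
  have hin (b : κ) : Module.finrank K (span K (w '' A)) ≤ (colorClass c b ∩ A).ncard :=
    have := FiniteDimensional.span_of_finite K ((colorClass c b ∩ A).toFinite.image w)
    (finrank_mono (hspan b)).trans (finrank_span_image_le_ncard w (Set.toFinite _))
  have hout : Aᶜ.ncard ≤ ∑ b, (colorClass c b \ A).ncard := by
    have hcover : Aᶜ ⊆ ⋃ b, colorClass c b \ A := by
      rw [← Set.iUnion_sdiff, ← compl_uncolored]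
      exact fun x hx ↦ ⟨fun hxc ↦ hx (hA hxc), hx⟩
    exact (Set.ncard_le_ncard hcover).trans (Set.ncard_iUnion_le_of_fintype _)
  calc Fintype.card κ * Module.finrank K (span K (w '' A)) + Aᶜ.ncard
      = ∑ _b : κ, Module.finrank K (span K (w '' A)) + Aᶜ.ncard := by simp
    _ ≤ ∑ b, (colorClass c b ∩ A).ncard + ∑ b, (colorClass c b \ A).ncard :=
      add_le_add (Finset.sum_le_sum fun b _ ↦ hin b) hout
    _ = ∑ b, (colorClass c b).ncard := by
      rw [← Finset.sum_add_distrib]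
      exact Finset.sum_congr rfl fun b _ ↦ Set.ncard_inter_add_ncard_sdiff_eq_ncard _ _

-- The base packing theorem of Edmonds, for linear matroids.
theorem exists_pairwise_disjoint_span_image_eq_span_range (w : ι → M)
    (h : ∀ A : Set ι, Fintype.card κ * Module.finrank K (span K (Set.range w)) ≤
      Fintype.card κ * Module.finrank K (span K (w '' A)) + Aᶜ.ncard) :
    ∃ T : κ → Set ι, Pairwise (Disjoint on T) ∧
      ∀ b, span K (w '' T b) = span K (Set.range w) := by
  classical
  obtain ⟨c, hc⟩ := exists_isOptimalColoring κ K w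
  refine ⟨colorClass c, pairwise_disjoint_colorClass c, fun b ↦ ?_⟩
  have := FiniteDimensional.span_of_finite K (Set.finite_range w)
  have hle (b : κ) : span K (w '' colorClass c b) ≤ span K (Set.range w) :=
    span_mono (Set.image_subset_range w _)
  have hcard (b : κ) : Module.finrank K (span K (w '' colorClass c b)) = (colorClass c b).ncard :=
    finrank_span_image_eq_ncard (hc.1 b) (Set.toFinite _)
  have hncard_le (b : κ) : (colorClass c b).ncard ≤ Module.finrank K (span K (Set.range w)) :=
    (hcard b).symm.trans_le (finrank_mono (hle b))
  have hsum_ge : ∑ _b : κ, Module.finrank K (span K (Set.range w)) ≤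
      ∑ b, (colorClass c b).ncard := by
    simpa using (h (exchangeable K w c)).trans
      (card_mul_finrank_add_ncard_compl_le_sum_ncard_colorClass
        uncolored_subset_exchangeable hc.span_exchangeable_le)
  have hncard_eq : (colorClass c b).ncard = Module.finrank K (span K (Set.range w)) :=
    (Finset.sum_eq_sum_iff_of_le fun b _ ↦ hncard_le b).1
      ((Finset.sum_le_sum fun b _ ↦ hncard_le b).antisymm hsum_ge) b (Finset.mem_univ b)
  exact eq_of_le_of_finrank_eq (hle b) ((hcard b).trans hncard_eq)

end BasePacking

section BoundarySpace

open Submodule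

variable {V : Type*} {G H : SimpleGraph V}

/-- The boundary over `ZMod 2` of an edge, as a `0`-chain: `s(u, v)` goes to `u + v`. Loops have
boundary zero. -/
noncomputable def edgeBoundary : Sym2 V → V →₀ ZMod 2 :=
  Sym2.lift ⟨fun u v ↦ .single u 1 + .single v 1, fun _ _ ↦ add_comm _ _⟩

@[simp]
theorem edgeBoundary_mk (u v : V) : edgeBoundary s(u, v) = .single u 1 + .single v 1 :=
  rfl

theorem edgeBoundary_apply_of_mem {x : Sym2 V} (hx : ¬ x.IsDiag) {v : V} (hv : v ∈ x) :
    edgeBoundary x v = 1 := by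
  obtain ⟨u, rfl⟩ := hv
  rw [Sym2.mk_isDiag_iff] at hx
  simp [Ne.symm hx]

theorem edgeBoundary_apply_of_notMem {x : Sym2 V} {v : V} (hv : v ∉ x) : edgeBoundary x v = 0 := by
  induction x with
  | _ a b =>
    rw [Sym2.mem_iff, not_or] at hv
    simp [Ne.symm hv.1, Ne.symm hv.2]

theorem edgeBoundary_add_edgeBoundary (u v t : V) :
    edgeBoundary s(u, v) + edgeBoundary s(v, t) = edgeBoundary s(u, t) := by
  simp only [edgeBoundary_mk]
  rw [add_assoc, ← add_assoc (Finsupp.single v 1), ZModModule.add_self, zero_add]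

variable (H) in
/-- The span of the edge boundaries of `H`. -/
noncomputable def boundarySpace : Submodule (ZMod 2) (V →₀ ZMod 2) :=
  span (ZMod 2) (edgeBoundary '' H.edgeSet)

theorem edgeBoundary_mem_boundarySpace_of_reachable {u v : V} (h : H.Reachable u v) :
    edgeBoundary s(u, v) ∈ boundarySpace H := by
  obtain ⟨p⟩ := h
  induction p with
  | nil => simp [ZModModule.add_self]
  | @cons a b t hab _ ih =>
    rw [← edgeBoundary_add_edgeBoundary a b t]
    exact add_mem (subset_span ⟨_, hab, rfl⟩) ih

theorem add_mapDomain_mem_boundarySpace {ρ : V → V} (hρ : ∀ v, H.Reachable v (ρ v))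
    (y : V →₀ ZMod 2) : y + y.mapDomain ρ ∈ boundarySpace H := by
  induction y using Finsupp.induction_linear with
  | zero => simp
  | add y z hy hz =>
    rw [Finsupp.mapDomain_add, add_add_add_comm]
    exact add_mem hy hz
  | single v a =>
    simpa [Finsupp.mapDomain_single] using
      smul_mem _ a (edgeBoundary_mem_boundarySpace_of_reachable (hρ v))

theorem boundarySpace_eq_ker_lmapDomain :
    boundarySpace H = LinearMap.ker
      (Finsupp.lmapDomain (ZMod 2) (ZMod 2) H.connectedComponentMk) := by
  apply le_antisymm
  · refine span_le.2 ?_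
    rintro _ ⟨x, hx, rfl⟩
    induction x with
    | _ u v =>
      have huv : H.connectedComponentMk u = H.connectedComponentMk v :=
        ConnectedComponent.sound (Adj.reachable hx)
      simp [Finsupp.mapDomain_add, Finsupp.mapDomain_single, huv, ZModModule.add_self]
  · intro y hy
    obtain ⟨rep, hrep⟩ : H.connectedComponentMk.HasRightInverse :=
      Quot.mk_surjective.hasRightInverse
    have hmem := add_mapDomain_mem_boundarySpace (H := H) (ρ := rep ∘ H.connectedComponentMk)
      (fun v ↦ (ConnectedComponent.exact (hrep _)).symm) y
    rw [LinearMap.mem_ker, Finsupp.lmapDomain_apply] at hy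
    rwa [Finsupp.mapDomain_comp, hy, Finsupp.mapDomain_zero, add_zero] at hmem

theorem edgeBoundary_mem_boundarySpace_iff {u v : V} :
    edgeBoundary s(u, v) ∈ boundarySpace H ↔ H.Reachable u v := by
  refine ⟨fun h ↦ ?_, edgeBoundary_mem_boundarySpace_of_reachable⟩
  rw [boundarySpace_eq_ker_lmapDomain, LinearMap.mem_ker, Finsupp.lmapDomain_apply,
    edgeBoundary_mk, Finsupp.mapDomain_add, Finsupp.mapDomain_single, Finsupp.mapDomain_single,
    ← ZModModule.sub_eq_add, sub_eq_zero] at h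
  exact ConnectedComponent.exact (Finsupp.single_left_injective one_ne_zero h)

theorem finrank_boundarySpace_add_card_connectedComponent [Finite V] (H : SimpleGraph V) :
    Module.finrank (ZMod 2) (boundarySpace H) + Nat.card H.ConnectedComponent = Nat.card V := by
  have := Fintype.ofFinite V
  have := Fintype.ofFinite H.ConnectedComponent
  have hsurj : LinearMap.range (Finsupp.lmapDomain (ZMod 2) (ZMod 2) H.connectedComponentMk) = ⊤ :=
    LinearMap.range_eq_top.2 (Finsupp.mapDomain_surjective Quot.mk_surjective)
  have hrank := LinearMap.finrank_range_add_finrank_ker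
    (Finsupp.lmapDomain (ZMod 2) (ZMod 2) H.connectedComponentMk)
  rw [hsurj, finrank_top, Module.finrank_finsupp_self, Module.finrank_finsupp_self,
    ← boundarySpace_eq_ker_lmapDomain] at hrank
  simp only [Nat.card_eq_fintype_card]
  omega

theorem mul_finrank_boundarySpace_le [Finite V] [Nonempty V] {k m : ℕ}
    (h : k * Nat.card H.ConnectedComponent ≤ m + k) :
    k * Module.finrank (ZMod 2) (boundarySpace G) ≤
      k * Module.finrank (ZMod 2) (boundarySpace H) + m := by
  have hG := finrank_boundarySpace_add_card_connectedComponent G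
  have hH := finrank_boundarySpace_add_card_connectedComponent H
  have hpos : 1 ≤ Nat.card G.ConnectedComponent := Nat.card_pos
  nlinarith

end BoundarySpace

section TreePacking

open Function Submodule

variable {V Q : Type*} {G : SimpleGraph V}

/-- The edges of `G` joining distinct classes of the partition of `V` into the fibres of `π`. -/
def crossingEdges (G : SimpleGraph V) (π : V → Q) : Set (Sym2 V) :=
  {x ∈ G.edgeSet | ¬ (x.map π).IsDiag}

theorem crossingEdges_subset_deleteEdges_union (G : SimpleGraph V) (s : Set (Sym2 V)) (π : V → Q) :
    crossingEdges G π ⊆ crossingEdges (G.deleteEdges s) π ∪ s := by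
  rintro x ⟨hxG, hxπ⟩
  by_cases hxs : x ∈ s
  · exact Or.inr hxs
  · exact Or.inl ⟨by simp [hxG, hxs], hxπ⟩

theorem crossingEdges_connectedComponentMk_eq_empty (G : SimpleGraph V) :
    crossingEdges G G.connectedComponentMk = ∅ := by
  refine Set.eq_empty_of_forall_notMem fun x ⟨hxG, hxπ⟩ ↦ ?_
  induction x with
  | _ u v => exact hxπ (ConnectedComponent.sound (Adj.reachable hxG))

theorem EdgeConnGe.le_ncard_crossingEdges_mem {k : ℕ} (hG : EdgeConnGe G k) (π : V → Q) {a b : V}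
    (hab : π b ≠ π a) : k ≤ {x ∈ crossingEdges G π | π a ∈ x.map π}.ncard := by
  by_contra! hlt
  obtain ⟨p⟩ := (hG.2 _ hlt).preconnected a b
  obtain ⟨d, -, hfst, hsnd⟩ := p.exists_boundary_dart (π ⁻¹' {π a}) rfl hab
  have hadj := d.adj
  rw [deleteEdges_adj] at hadj
  refine hadj.2 ⟨⟨hadj.1, fun hdiag ↦ hsnd ?_⟩, ?_⟩
  · exact (Sym2.mk_isDiag_iff.1 hdiag).symm.trans hfst
  · exact Sym2.mem_map.2 ⟨d.fst, Sym2.mem_mk_left _ _, hfst⟩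

theorem EdgeConnGe.mul_card_le_two_mul_ncard_crossingEdges [Finite V] [Nontrivial Q] {k : ℕ}
    (hG : EdgeConnGe G k) {π : V → Q} (hπ : π.Surjective) :
    k * Nat.card Q ≤ 2 * (crossingEdges G π).ncard := by
  classical
  have := Fintype.ofFinite V
  have := Finite.of_surjective π hπ
  have := Fintype.ofFinite Q
  have hcount := Finset.card_mul_le_card_mul (s := (Finset.univ : Finset Q))
    (t := (crossingEdges G π).toFinset) (m := k) (n := 2) (fun q x ↦ q ∈ x.map π) ?_ ?_
  · rwa [Finset.card_univ, ← Nat.card_eq_fintype_card, ← Set.ncard_eq_toFinset_card',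
      mul_comm, mul_comm _ 2] at hcount
  · intro q _
    obtain ⟨a, rfl⟩ := hπ q
    obtain ⟨q', hq'⟩ := exists_ne (π a)
    obtain ⟨b, rfl⟩ := hπ q'
    refine (hG.le_ncard_crossingEdges_mem π hq').trans_eq ?_
    rw [← Set.ncard_coe_finset, Finset.coe_bipartiteAbove]
    simp only [Set.mem_toFinset]
  · intro x _
    have hends : Finset.univ.bipartiteBelow (fun q x ↦ q ∈ x.map π) x = (x.map π).toFinset := by
      ext q
      simp [Finset.mem_bipartiteBelow]
    rw [hends]
    induction x with
    | _ u v => exact (congrArg Finset.card Sym2.toFinset_mk_eq).trans_le Finset.card_le_two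

variable {κ : Type*} [Fintype κ]

theorem edgeSet_fromEdgeSet_image_val (A : Set G.edgeSet) :
    (fromEdgeSet (Subtype.val '' A)).edgeSet = Subtype.val '' A := by
  rw [edgeSet_fromEdgeSet, sdiff_eq_left, Set.disjoint_left]
  rintro _ ⟨x, -, rfl⟩
  exact G.not_isDiag_of_mem_edgeSet x.2

theorem boundarySpace_fromEdgeSet_image_val (A : Set G.edgeSet) :
    boundarySpace (fromEdgeSet (Subtype.val '' A)) =
      span (ZMod 2) ((fun x : G.edgeSet ↦ edgeBoundary x.1) '' A) := by
  rw [boundarySpace, edgeSet_fromEdgeSet_image_val, Set.image_image]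

theorem boundarySpace_eq_span_range (G : SimpleGraph V) :
    boundarySpace G = span (ZMod 2) (Set.range fun x : G.edgeSet ↦ edgeBoundary x.1) := by
  rw [boundarySpace, Set.image_eq_range]

theorem ncard_crossingEdges_fromEdgeSet_le [Finite V] (A : Set G.edgeSet) :
    (crossingEdges G (fromEdgeSet (Subtype.val '' A)).connectedComponentMk).ncard ≤ Aᶜ.ncard := by
  rw [← Set.ncard_image_of_injective _ Subtype.val_injective]
  refine Set.ncard_le_ncard fun x ⟨hxG, hxπ⟩ ↦ ⟨⟨x, hxG⟩, fun hxA ↦ ?_, rfl⟩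
  have hxH : x ∈ (fromEdgeSet (Subtype.val '' A)).edgeSet := by
    rw [edgeSet_fromEdgeSet_image_val]
    exact ⟨_, hxA, rfl⟩
  exact (crossingEdges_connectedComponentMk_eq_empty _).subset ⟨hxH, hxπ⟩

-- The Nash-Williams–Tutte theorem on packing spanning trees.
theorem exists_pairwise_disjoint_connected [Finite V] [Nonempty V]
    (h : ∀ r : Setoid V, Fintype.card κ * Nat.card (Quotient r) ≤
      (crossingEdges G (Quotient.mk r)).ncard + Fintype.card κ) :
    ∃ T : κ → SimpleGraph V, Pairwise (Disjoint on T) ∧ ∀ b, T b ≤ G ∧ (T b).Connected := by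
  have hcomp (H : SimpleGraph V) : Fintype.card κ * Nat.card H.ConnectedComponent ≤
      (crossingEdges G H.connectedComponentMk).ncard + Fintype.card κ := h H.reachableSetoid
  have hG (b : κ) : G.Preconnected := by
    have hκ : 0 < Fintype.card κ := Fintype.card_pos_iff.2 ⟨b⟩
    have hle := hcomp G
    rw [crossingEdges_connectedComponentMk_eq_empty, Set.ncard_empty, zero_add] at hle
    have hsub : Subsingleton G.ConnectedComponent :=
      Finite.card_le_one_iff_subsingleton.1 (Nat.le_of_mul_le_mul_left (by simpa using hle) hκ)
    exact fun u v ↦ ConnectedComponent.exact (Subsingleton.elim _ _)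
  obtain ⟨T, hdisj, hspan⟩ := exists_pairwise_disjoint_span_image_eq_span_range (κ := κ)
    (K := ZMod 2) (fun x : G.edgeSet ↦ edgeBoundary x.1) fun A ↦ by
      rw [← boundarySpace_eq_span_range, ← boundarySpace_fromEdgeSet_image_val]
      exact mul_finrank_boundarySpace_le <| (hcomp (fromEdgeSet (Subtype.val '' A))).trans
        (Nat.add_le_add_right (ncard_crossingEdges_fromEdgeSet_le A) _)
  refine ⟨fun b ↦ fromEdgeSet (Subtype.val '' T b), fun i j hij ↦ ?_, fun b ↦ ⟨?_, ⟨?_⟩⟩⟩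
  · rw [onFun, ← disjoint_edgeSet, edgeSet_fromEdgeSet_image_val, edgeSet_fromEdgeSet_image_val,
      Set.disjoint_image_iff Subtype.val_injective]
    exact hdisj hij
  · rw [← edgeSet_subset_edgeSet, edgeSet_fromEdgeSet_image_val]
    exact Subtype.coe_image_subset _ _
  · intro u v
    rw [← edgeBoundary_mem_boundarySpace_iff, boundarySpace_fromEdgeSet_image_val, hspan,
      ← boundarySpace_eq_span_range, edgeBoundary_mem_boundarySpace_iff]
    exact hG b u v

theorem EdgeConnGe.exists_pairwise_disjoint_connected_deleteEdges [Finite V]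
    (hG : EdgeConnGe G (2 * Fintype.card κ)) {s : Set (Sym2 V)} (hs : s.ncard ≤ Fintype.card κ) :
    ∃ T : κ → SimpleGraph V, Pairwise (Disjoint on T) ∧
      ∀ b, T b ≤ G.deleteEdges s ∧ (T b).Connected := by
  have := hG.1.nonempty
  refine exists_pairwise_disjoint_connected fun r ↦ ?_
  obtain hsub | hnt := subsingleton_or_nontrivial (Quotient r)
  · have hcard : Nat.card (Quotient r) ≤ 1 := Finite.card_le_one_iff_subsingleton.2 hsub
    nlinarith
  · have hcross := hG.mul_card_le_two_mul_ncard_crossingEdges (Quotient.mk_surjective (s := r))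
    have hdelete := (Set.ncard_le_ncard
      (crossingEdges_subset_deleteEdges_union G s (Quotient.mk r))).trans (Set.ncard_union_le _ _)
    rw [mul_assoc] at hcross
    omega

end TreePacking

section Flow

variable {V : Type*} {G H T₁ T₂ : SimpleGraph V}

theorem exists_supported_linearCombination_edgeBoundary_eq (hH : H.Connected)
    (a : Sym2 V →₀ ZMod 2) :
    ∃ l ∈ Finsupp.supported (ZMod 2) (ZMod 2) H.edgeSet,
      Finsupp.linearCombination (ZMod 2) edgeBoundary l =
        Finsupp.linearCombination (ZMod 2) edgeBoundary a := by
  refine (Finsupp.mem_span_image_iff_linearCombination (ZMod 2)).1 ?_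
  refine Submodule.sum_mem _ fun x _ ↦ Submodule.smul_mem _ _ ?_
  induction x with
  | _ u v => exact edgeBoundary_mem_boundarySpace_of_reachable (hH.preconnected u v)

theorem linearCombination_edgeBoundary_apply {θ : Sym2 V →₀ ZMod 2}
    (hθ : θ ∈ Finsupp.supported (ZMod 2) (ZMod 2) G.edgeSet) (v : V) :
    Finsupp.linearCombination (ZMod 2) edgeBoundary θ v = ∑ᶠ x ∈ G.incidenceSet v, θ x := by
  classical
  have hsum : ∑ᶠ x ∈ G.incidenceSet v, θ x = ∑ x ∈ θ.support with x ∈ G.incidenceSet v, θ x :=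
    finsum_mem_eq_sum_of_inter_support_eq _ (by ext; simp +contextual)
  rw [hsum, Finset.sum_filter, Finsupp.linearCombination_apply, Finsupp.sum,
    Finsupp.finsetSum_apply]
  refine Finset.sum_congr rfl fun x hx ↦ ?_
  have hxG : x ∈ G.edgeSet := hθ hx
  by_cases hv : v ∈ x
  · have hxv : x ∈ G.incidenceSet v := ⟨hxG, hv⟩
    simp [hxv, edgeBoundary_apply_of_mem (G.not_isDiag_of_mem_edgeSet hxG) hv]
  · have hxv : x ∉ G.incidenceSet v := fun h ↦ hv h.2
    simp [hxv, edgeBoundary_apply_of_notMem hv]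

theorem exists_cycle_eq_one_of_connected [Finite V] (hHG : H ≤ G) (hH : H.Connected) :
    ∃ θ : Sym2 V → ZMod 2, (∀ v, ∑ᶠ x ∈ G.incidenceSet v, θ x = 0) ∧
      ∀ x ∈ G.edgeSet, x ∉ H.edgeSet → θ x = 1 := by
  let a : Sym2 V →₀ ZMod 2 :=
    Finsupp.equivFunOnFinite.symm ((G.edgeSet \ H.edgeSet).indicator 1)
  have ha : a ∈ Finsupp.supported (ZMod 2) (ZMod 2) G.edgeSet :=
    (Finsupp.mem_supported' _ _).2 fun x hx ↦ Set.indicator_of_notMem (fun h ↦ hx h.1) _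
  obtain ⟨l, hl, hla⟩ := exists_supported_linearCombination_edgeBoundary_eq hH a
  have hal : a + l ∈ Finsupp.supported (ZMod 2) (ZMod 2) G.edgeSet :=
    add_mem ha (Finsupp.supported_mono (edgeSet_mono hHG) hl)
  refine ⟨⇑(a + l), fun v ↦ ?_, fun x hxG hxH ↦ ?_⟩
  · rw [← linearCombination_edgeBoundary_apply hal, map_add, hla, ZModModule.add_self,
      Finsupp.zero_apply]
  · have hax : a x = 1 := Set.indicator_of_mem (Set.mem_sdiff_of_mem hxG hxH) _
    rw [Finsupp.add_apply, hax, (Finsupp.mem_supported' _ _).1 hl x hxH, add_zero]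

theorem exists_isNowhereZeroFlow_of_disjoint_connected [Finite V] (hT₁G : T₁ ≤ G) (hT₂G : T₂ ≤ G)
    (hT₁ : T₁.Connected) (hT₂ : T₂.Connected) (hdisj : Disjoint T₁ T₂) :
    ∃ θ : Sym2 V → ZMod 2 × ZMod 2, IsNowhereZeroFlow G θ ∧
      ∀ x ∈ G.edgeSet, x ∉ T₁.edgeSet → x ∉ T₂.edgeSet → θ x = 1 := by
  obtain ⟨θ₁, hflow₁, hone₁⟩ := exists_cycle_eq_one_of_connected hT₁G hT₁
  obtain ⟨θ₂, hflow₂, hone₂⟩ := exists_cycle_eq_one_of_connected hT₂G hT₂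
  refine ⟨fun x ↦ (θ₁ x, θ₂ x), ⟨fun x hx hzero ↦ ?_, fun v ↦ ?_⟩, fun x hx h₁ h₂ ↦ ?_⟩
  · rw [Prod.mk_eq_zero] at hzero
    by_cases hx₁ : x ∈ T₁.edgeSet
    · have hx₂ := Set.disjoint_left.1 (disjoint_edgeSet.2 hdisj) hx₁
      exact one_ne_zero ((hone₂ x hx hx₂).symm.trans hzero.2)
    · exact one_ne_zero ((hone₁ x hx hx₁).symm.trans hzero.1)
  · have hfin := Set.toFinite (G.incidenceSet v)
    ext
    · exact ((AddMonoidHom.fst (ZMod 2) (ZMod 2)).map_finsum_mem _ hfin).trans (hflow₁ v)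
    · exact ((AddMonoidHom.snd (ZMod 2) (ZMod 2)).map_finsum_mem _ hfin).trans (hflow₂ v)
  · exact Prod.ext (hone₁ x hx h₁) (hone₂ x hx h₂)

end Flow

theorem stmt_0 {V : Type*} [Fintype V] (G : SimpleGraph V)
    (hG : EdgeConnGe G 4) (e f : Sym2 V) (he : e ∈ G.edgeSet) (hf : f ∈ G.edgeSet) :
    ∃ θ : Sym2 V → ZMod 2 × ZMod 2, IsNowhereZeroFlow G θ ∧ θ e = θ f := by
  obtain ⟨T, hdisj, hT⟩ := EdgeConnGe.exists_pairwise_disjoint_connected_deleteEdges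
    (κ := Bool) hG (s := {e, f}) ((Set.ncard_insert_le e {f}).trans (by simp))
  have hle (b : Bool) : T b ≤ G := (hT b).1.trans (deleteEdges_le _)
  have havoid (b : Bool) (x : Sym2 V) (hx : x ∈ ({e, f} : Set (Sym2 V))) : x ∉ (T b).edgeSet :=
    fun hxT ↦ ((edgeSet_deleteEdges _).subset (edgeSet_mono (hT b).1 hxT)).2 hx
  obtain ⟨θ, hflow, hone⟩ := exists_isNowhereZeroFlow_of_disjoint_connected (hle true) (hle false)
    (hT true).2 (hT false).2 (hdisj (by decide))
  have hθe : θ e = 1 := hone e he (havoid true e (by simp)) (havoid false e (by simp))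
  have hθf : θ f = 1 := hone f hf (havoid true f (by simp)) (havoid false f (by simp))
  exact ⟨θ, hflow, hθe.trans hθf.symm⟩
end

section
/- Let G be a finite simple graph that is 4-edge-connected, and let e and f be two distinct edges incident to the same vertex v. Then G admits a nowhere-zero Z_2^2-flow θ such that θ(e) ≠ θ(f). -/
open SimpleGraph

/-! Let `s` be a set of at most `k - 2` edges with prescribed values (in the theorem, `k = 4` and
`s = {e, f}`), and let `E` be the edge set of `G`. Suppose that `A` and `B` are disjoint subsets
of `E \ s` whose columns each span the column space of the mod 2 incidence matrix. Then any
`ZMod 2`-valued function can be corrected on `A` to a flow, and another one on `B`. Starting from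
the prescribed values on `s` and from `1` elsewhere, the resulting pair of flows is nowhere zero,
since no edge is corrected twice.

Such `A` and `B` exist by the two-matroid case of matroid union as soon as
`2 * rank E ≤ #((E \ s) \ X) + 2 * rank X` for all `X ⊆ E \ s`. If the graph with edge set `X` has
`c ≥ 2` components, then `rank X ≥ |V| - c`, while `k`-edge-connectivity forces at least
`k * c / 2` edges between the components; for `4 ≤ k` this is enough. -/

open Finset
open scoped Matrix

section SubmodularPacking

variable {α : Type*} [DecidableEq α]

/-- Submodularity of a set function, the property of matroid rank functions on which
the exchange argument of matroid union rests. -/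
def IsSubmodular (r : Finset α → ℕ) : Prop :=
  ∀ P Q, r (P ∪ Q) + r (P ∩ Q) ≤ r P + r Q

/-- The rank condition of matroid union, relative to sets `A` and `B` chosen so far and a set `S` of
elements still to be distributed: no `X ⊆ S` shows that `A` and `B` cannot be enlarged by
disjoint subsets of `S` to sets of total rank `D`. -/
def PackingBound (r₁ r₂ : Finset α → ℕ) (D : ℕ) (S A B : Finset α) : Prop :=
  ∀ X ⊆ S, D ≤ #(S \ X) + r₁ (X ∪ A) + r₂ (X ∪ B)

variable {r₁ r₂ : Finset α → ℕ} {D : ℕ} {S A B : Finset α}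

lemma card_sdiff_union_add_card_sdiff_inter (S X Y : Finset α) :
    #(S \ (X ∪ Y)) + #(S \ (X ∩ Y)) = #(S \ X) + #(S \ Y) := by
  rw [sdiff_union_distrib, sdiff_inter_distrib_right, card_inter_add_card_union]

lemma IsSubmodular.insert_union_add_inter_union_le {r : Finset α → ℕ} (hr : IsSubmodular r)
    (hmono : Monotone r) (a : α) (X Y A : Finset α) :
    r (insert a (X ∪ Y) ∪ A) + r (X ∩ Y ∪ A) ≤ r (X ∪ insert a A) + r (Y ∪ A) := by
  have hunion : insert a (X ∪ Y) ∪ A = X ∪ insert a A ∪ (Y ∪ A) := by grind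
  have hinter : X ∩ Y ∪ A ⊆ (X ∪ insert a A) ∩ (Y ∪ A) := by grind
  calc r (insert a (X ∪ Y) ∪ A) + r (X ∩ Y ∪ A)
    _ ≤ r (X ∪ insert a A ∪ (Y ∪ A)) + r ((X ∪ insert a A) ∩ (Y ∪ A)) := by
      rw [hunion]; gcongr; exact hmono hinter
    _ ≤ r (X ∪ insert a A) + r (Y ∪ A) := hr _ _

-- If `X` and `Y` violate the two alternatives, then by submodularity `insert a (X ∪ Y)` or `X ∩ Y`
-- violates the hypothesis.
lemma PackingBound.insert_left_or_insert_right (hmono₁ : Monotone r₁) (hmono₂ : Monotone r₂)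
    (hsub₁ : IsSubmodular r₁) (hsub₂ : IsSubmodular r₂) {a : α} (ha : a ∉ S)
    (h : PackingBound r₁ r₂ D (insert a S) A B) :
    PackingBound r₁ r₂ D S (insert a A) B ∨ PackingBound r₁ r₂ D S A (insert a B) := by
  by_contra! hviolated
  simp only [PackingBound, not_forall, not_le] at hviolated
  obtain ⟨⟨X, hXS, hX⟩, Y, hYS, hY⟩ := hviolated
  have hbound_union := h (insert a (X ∪ Y)) (insert_subset_insert _ (union_subset hXS hYS))
  have hbound_inter := h (X ∩ Y) ((inter_subset_left.trans hXS).trans (subset_insert _ _))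
  have hrank₁ := hsub₁.insert_union_add_inter_union_le hmono₁ a X Y A
  have hrank₂ := hsub₂.insert_union_add_inter_union_le hmono₂ a Y X B
  rw [union_comm Y X, inter_comm Y X] at hrank₂
  have hsdiff_union : insert a S \ insert a (X ∪ Y) = S \ (X ∪ Y) := by grind
  have hsdiff_inter : insert a S \ (X ∩ Y) = insert a (S \ (X ∩ Y)) := by grind
  rw [hsdiff_union] at hbound_union
  rw [hsdiff_inter, card_insert_of_notMem (by simp [ha])] at hbound_inter
  have hcard := card_sdiff_union_add_card_sdiff_inter S X Y
  omega

theorem PackingBound.exists_disjoint (hmono₁ : Monotone r₁) (hmono₂ : Monotone r₂)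
    (hsub₁ : IsSubmodular r₁) (hsub₂ : IsSubmodular r₂) (hSA : Disjoint S A) (hSB : Disjoint S B)
    (hAB : Disjoint A B) (h : PackingBound r₁ r₂ D S A B) :
    ∃ A' ⊆ S ∪ A, ∃ B' ⊆ S ∪ B, Disjoint A' B' ∧ D ≤ r₁ A' + r₂ B' := by
  induction S using Finset.induction_on generalizing A B with
  | empty => exact ⟨A, by simp, B, by simp, hAB, by simpa using h ∅ subset_rfl⟩
  | insert a S ha ih =>
    rw [disjoint_insert_left] at hSA hSB
    rcases h.insert_left_or_insert_right hmono₁ hmono₂ hsub₁ hsub₂ ha with hleft | hright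
    · obtain ⟨A', hA', B', hB', hdisj, hD⟩ :=
        ih (by simp [ha, hSA.2]) hSB.2 (by simp [hSB.1, hAB]) hleft
      exact ⟨A', by grind, B', by grind, hdisj, hD⟩
    · obtain ⟨A', hA', B', hB', hdisj, hD⟩ :=
        ih hSA.2 (by simp [ha, hSB.2]) (by simp [hSA.1, hAB]) hright
      exact ⟨A', by grind, B', by grind, hdisj, hD⟩

end SubmodularPacking

section LinearMatroid

/-- `A` is a spanning set of the linear matroid represented by the family `v`. For the columns of
the mod 2 incidence matrix of a connected graph these are the edge sets of connected spanning
subgraphs. -/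
def SpansRange {ι E : Type*} (R : Type*) [Semiring R] [AddCommMonoid E] [Module R E] (v : ι → E)
    (A : Set ι) : Prop :=
  Submodule.span R (v '' A) = Submodule.span R (Set.range v)

variable {K E ι : Type*} [Field K] [AddCommGroup E] [Module K E]

lemma finrank_union_add_finrank_inter_le [FiniteDimensional K E] (s t : Set E) :
    (s ∪ t).finrank K + (s ∩ t).finrank K ≤ s.finrank K + t.finrank K := by
  have hinter : Submodule.span K (s ∩ t) ≤ Submodule.span K s ⊓ Submodule.span K t :=
    le_inf (Submodule.span_mono Set.inter_subset_left) (Submodule.span_mono Set.inter_subset_right)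
  rw [Set.finrank, Submodule.span_union]
  exact (Nat.add_le_add_left (Submodule.finrank_mono hinter) _).trans_eq
    (Submodule.finrank_sup_add_finrank_inf_eq _ _)

lemma monotone_finrank_image [FiniteDimensional K E] (v : ι → E) :
    Monotone fun X : Finset ι ↦ (v '' X).finrank K := fun _ _ hXY ↦
  Set.finrank_mono (Set.image_mono (coe_subset.2 hXY))

lemma isSubmodular_finrank_image [DecidableEq ι] [FiniteDimensional K E] (v : ι → E) :
    IsSubmodular fun X : Finset ι ↦ (v '' X).finrank K := fun P Q ↦ by
  simp only [coe_union, coe_inter, Set.image_union]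
  exact (Nat.add_le_add_left (Set.finrank_mono (Set.image_inter_subset v _ _)) _).trans
    (finrank_union_add_finrank_inter_le _ _)

lemma spansRange_of_finrank_le [FiniteDimensional K E] {v : ι → E} {A : Set ι}
    (h : (Set.range v).finrank K ≤ (v '' A).finrank K) : SpansRange K v A :=
  Submodule.eq_of_le_of_finrank_le (Submodule.span_mono (Set.image_subset_range v A)) h

theorem exists_disjoint_spansRange [DecidableEq ι] [FiniteDimensional K E] (v : ι → E)
    (S : Finset ι) (h : ∀ X ⊆ S, 2 * (Set.range v).finrank K ≤ #(S \ X) + 2 * (v '' X).finrank K) :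
    ∃ A ⊆ S, ∃ B ⊆ S, Disjoint A B ∧ SpansRange K v A ∧ SpansRange K v B := by
  have hbound : PackingBound (fun X ↦ (v '' X).finrank K) (fun X ↦ (v '' X).finrank K)
      (2 * (Set.range v).finrank K) S ∅ ∅ := fun X hXS ↦ by
    simpa [two_mul, add_assoc] using h X hXS
  obtain ⟨A, hAS, B, hBS, hAB, hrank⟩ := hbound.exists_disjoint
    (monotone_finrank_image v) (monotone_finrank_image v)
    (isSubmodular_finrank_image v) (isSubmodular_finrank_image v)
    (disjoint_empty_right _) (disjoint_empty_right _) (disjoint_empty_right _)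
  rw [union_empty] at hAS hBS
  have hA : (v '' A).finrank K ≤ (Set.range v).finrank K :=
    Set.finrank_mono (Set.image_subset_range v A)
  have hB : (v '' B).finrank K ≤ (Set.range v).finrank K :=
    Set.finrank_mono (Set.image_subset_range v B)
  exact ⟨A, hAS, B, hBS, hAB, spansRange_of_finrank_le (by lia), spansRange_of_finrank_le (by lia)⟩

lemma SpansRange.exists_mulVec_eq_zero {R m n : Type*} [CommRing R] [Fintype n]
    {M : Matrix m n R} {A : Set n} (hA : SpansRange R M.col A) (q : n → R) :
    ∃ x : n → R, (∀ j ∉ A, x j = q j) ∧ M *ᵥ x = 0 := by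
  have hspan : Submodule.span R (M.col '' A) = M.mulVecLin.range :=
    Eq.trans hA M.range_mulVecLin.symm
  have hq : M *ᵥ q ∈ Submodule.span R (M.col '' A) := hspan ▸ ⟨q, rfl⟩
  obtain ⟨c, hcA, hc⟩ := (Finsupp.mem_span_image_iff_linearCombination R).1 hq
  have hMc : M *ᵥ c = M *ᵥ q := by
    rw [← hc]
    ext i
    simp [Finsupp.linearCombination_apply, Finsupp.sum_fintype, Matrix.mulVec, dotProduct, mul_comm]
  refine ⟨q - c, fun j hj ↦ ?_, by rw [Matrix.mulVec_sub, hMc, sub_self]⟩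
  have hcj : c j = 0 := Finsupp.notMem_support_iff.1 fun hj' ↦ hj (hcA hj')
  rw [Pi.sub_apply, hcj, sub_zero]

end LinearMatroid

section IncidenceMatrix

variable {V : Type*} [DecidableEq V] {G : SimpleGraph V} [DecidableRel G.Adj]

lemma col_incMatrix_of_adj {R : Type*} [NonAssocSemiring R] {u w : V} (h : G.Adj u w) :
    (G.incMatrix R).col s(u, w) = Pi.single u 1 + Pi.single w 1 := by
  ext x
  have huw : u ≠ w := h.ne
  simp only [Matrix.col_apply, incMatrix_apply', mk'_mem_incidenceSet_iff, Pi.add_apply,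
    Pi.single_apply]
  grind

lemma single_sub_single_mem_span_col_incMatrix_of_reachable {H : SimpleGraph V} (hHG : H ≤ G)
    {u w : V} (h : H.Reachable u w) :
    (Pi.single u 1 - Pi.single w 1 : V → ZMod 2) ∈
      Submodule.span (ZMod 2) ((G.incMatrix (ZMod 2)).col '' H.edgeSet) := by
  obtain ⟨p⟩ := h
  induction p with
  | nil => simp
  | @cons u x w hux _ ih =>
    have hcol : (Pi.single u 1 - Pi.single x 1 : V → ZMod 2) ∈
        Submodule.span (ZMod 2) ((G.incMatrix (ZMod 2)).col '' H.edgeSet) := by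
      rw [ZModModule.sub_eq_add, ← col_incMatrix_of_adj (hHG hux)]
      exact Submodule.subset_span (Set.mem_image_of_mem _ hux)
    simpa using Submodule.add_mem _ hcol ih

variable [Fintype V]

-- Modulo the columns of `H`, the unit vectors at the vertices of a component become equal, so the
-- quotient is spanned by one vector for each component.
theorem card_le_finrank_col_incMatrix_add_card_connectedComponent {H : SimpleGraph V}
    (hHG : H ≤ G) :
    Fintype.card V ≤ ((G.incMatrix (ZMod 2)).col '' H.edgeSet).finrank (ZMod 2) +
      Nat.card H.ConnectedComponent := by
  set W := Submodule.span (ZMod 2) ((G.incMatrix (ZMod 2)).col '' H.edgeSet) with hW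
  let unitClass : H.ConnectedComponent → (V → ZMod 2) ⧸ W :=
    Quot.lift (fun v ↦ W.mkQ (Pi.single v 1)) fun u w huw ↦ (Submodule.Quotient.eq W).2
      (single_sub_single_mem_span_col_incMatrix_of_reachable hHG huw)
  have hrange : Set.range unitClass = W.mkQ '' Set.range (Pi.basisFun (ZMod 2) V) := by
    have hmk : Function.Surjective H.connectedComponentMk := Quot.mk_surjective
    rw [← Set.range_comp, ← hmk.range_comp unitClass]
    congr 1
    ext v : 1
    simp only [unitClass, Function.comp_apply, Pi.basisFun_apply]
    rfl
  have hspan : Submodule.span (ZMod 2) (Set.range unitClass) = ⊤ := by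
    rw [hrange, Submodule.span_image, (Pi.basisFun (ZMod 2) V).span_eq, Submodule.map_top,
      Submodule.range_mkQ]
  have hquot : Module.finrank (ZMod 2) ((V → ZMod 2) ⧸ W) ≤ Nat.card H.ConnectedComponent := by
    rw [← finrank_top, ← hspan, Nat.card_eq_fintype_card]
    exact finrank_range_le_card unitClass
  have hsum := W.finrank_quotient_add_finrank
  rw [Module.finrank_fintype_fun_eq_card] at hsum
  rw [Set.finrank, ← hW]
  lia

lemma sum_col_incMatrix_eq_zero (e : Sym2 V) : ∑ v, (G.incMatrix (ZMod 2)).col e v = 0 := by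
  by_cases he : e ∈ G.edgeSet
  · exact (sum_incMatrix_apply_of_mem_edgeSet G he).trans (by decide)
  · exact sum_incMatrix_apply_of_notMem_edgeSet G he

variable (G) in
lemma finrank_range_col_incMatrix_le :
    (Set.range (G.incMatrix (ZMod 2)).col).finrank (ZMod 2) ≤ Fintype.card V - 1 := by
  let total : (V → ZMod 2) →ₗ[ZMod 2] ZMod 2 := ∑ v, LinearMap.proj v
  have htotal (x : V → ZMod 2) : total x = ∑ v, x v := by simp [total]
  have hle : Submodule.span (ZMod 2) (Set.range (G.incMatrix (ZMod 2)).col) ≤ total.ker := by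
    rw [Submodule.span_le, Set.range_subset_iff]
    exact fun e ↦ (htotal _).trans (sum_col_incMatrix_eq_zero e)
  refine (Submodule.finrank_mono hle).trans ?_
  rcases isEmpty_or_nonempty V with _ | ⟨⟨v⟩⟩
  · simp [Module.finrank_zero_of_subsingleton]
  · have hne : total.ker ≠ ⊤ := fun h ↦ by
      have hv : Pi.single v 1 ∈ total.ker := h ▸ Submodule.mem_top
      simp [htotal] at hv
    have hlt := Submodule.finrank_lt hne
    rw [Module.finrank_fintype_fun_eq_card] at hlt
    exact Nat.le_sub_one_of_lt hlt

variable (G) in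
lemma incMatrix_mulVec_apply {R : Type*} [CommSemiring R] (x : Sym2 V → R) (v : V) :
    (G.incMatrix R *ᵥ x) v = ∑ᶠ e ∈ G.incidenceSet v, x e := by
  rw [finsum_mem_def, finsum_eq_sum_of_fintype]
  exact sum_congr rfl fun e _ ↦ by simp [incMatrix_apply, Set.indicator_apply]

lemma finsum_mem_incidenceSet_prodMk_eq_zero {R : Type*} [CommSemiring R] {x y : Sym2 V → R}
    (hx : G.incMatrix R *ᵥ x = 0) (hy : G.incMatrix R *ᵥ y = 0) (v : V) :
    ∑ᶠ e ∈ G.incidenceSet v, (x e, y e) = 0 := by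
  have hfin := (G.incidenceSet v).toFinite
  ext
  · rw [Prod.fst_zero, ← AddMonoidHom.coe_fst, AddMonoidHom.map_finsum_mem _ _ hfin]
    exact (incMatrix_mulVec_apply G x v).symm.trans (congrFun hx v)
  · rw [Prod.snd_zero, ← AddMonoidHom.coe_snd, AddMonoidHom.map_finsum_mem _ _ hfin]
    exact (incMatrix_mulVec_apply G y v).symm.trans (congrFun hy v)

end IncidenceMatrix

section EdgeCut

variable {V C : Type*} {G : SimpleGraph V} {k : ℕ}

lemma EdgeConnGe.isEdgeConnected (hG : EdgeConnGe G k) : G.IsEdgeConnected k := by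
  intro u v s hs
  have hfin : s.Finite := Set.finite_of_encard_le_coe hs.le
  rw [← hfin.cast_ncard_eq, Nat.cast_lt] at hs
  exact (hG.2 s hs).preconnected u v

variable [Fintype V] [DecidableEq C] [DecidableRel G.Adj]

lemma le_card_cut_of_isEdgeConnected [Nontrivial C] (hG : G.IsEdgeConnected k) {π : V → C}
    (hπ : π.Surjective) (c : C) :
    k ≤ #{e ∈ G.edgeFinset | ¬ (e.map π).IsDiag ∧ c ∈ e.map π} := by
  by_contra! hlt
  set cut := {e ∈ G.edgeFinset | ¬ (e.map π).IsDiag ∧ c ∈ e.map π} with hcut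
  obtain ⟨c', hc'⟩ := exists_ne c
  obtain ⟨u, rfl⟩ := hπ c
  obtain ⟨w, rfl⟩ := hπ c'
  obtain ⟨p⟩ := hG u w (s := cut) (by simpa [Set.encard_coe_eq_coe_finsetCard] using hlt)
  obtain ⟨d, -, hfst, hsnd⟩ := p.exists_boundary_dart (π ⁻¹' {π u}) rfl hc'
  have hd := deleteEdges_adj.1 d.adj
  refine hd.2 ?_
  rw [Set.mem_preimage, Set.mem_singleton_iff] at hfst hsnd
  simp [hcut, hd.1, hfst, Ne.symm hsnd]

-- Every edge between different classes lies in exactly two of the cuts around single classes.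
theorem mul_card_le_two_mul_card_crossing [Fintype C] [Nontrivial C] (hG : G.IsEdgeConnected k)
    {π : V → C} (hπ : π.Surjective) :
    k * Fintype.card C ≤ 2 * #{e ∈ G.edgeFinset | ¬ (e.map π).IsDiag} := by
  set crossing := {e ∈ G.edgeFinset | ¬ (e.map π).IsDiag} with hcrossing
  calc k * Fintype.card C
    _ = ∑ _c : C, k := by simp [mul_comm]
    _ ≤ ∑ c, #{e ∈ crossing | c ∈ e.map π} := sum_le_sum fun c _ ↦ by
      rw [hcrossing, filter_filter]
      exact le_card_cut_of_isEdgeConnected hG hπ c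
    _ = ∑ e ∈ crossing, #{c | c ∈ e.map π} := by
      simp only [card_filter]
      exact sum_comm
    _ = ∑ _e ∈ crossing, 2 := sum_congr rfl fun e he ↦ by
      rw [← Sym2.card_toFinset_of_not_isDiag _ (mem_filter.1 he).2]
      congr 1
      ext c
      simp
    _ = 2 * #crossing := by simp [mul_comm]

end EdgeCut

section SpanningEdgeSets

variable {V : Type*} [DecidableEq V] {G : SimpleGraph V} [DecidableRel G.Adj] {k : ℕ}

theorem two_mul_card_connectedComponent_le [Fintype V] (hk : 4 ≤ k) (hG : G.IsEdgeConnected k)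
    {s : Finset (Sym2 V)} (hs : #s + 2 ≤ k) {H : SimpleGraph V}
    {X : Finset (Sym2 V)} (hXH : ↑X ⊆ H.edgeSet) :
    2 * Nat.card H.ConnectedComponent ≤ #((G.edgeFinset \ s) \ X) + 2 := by
  classical
  by_cases hc : Nat.card H.ConnectedComponent ≤ 1
  · lia
  rw [not_le, Nat.card_eq_fintype_card] at hc
  rw [Nat.card_eq_fintype_card]
  have : Nontrivial H.ConnectedComponent := Fintype.one_lt_card_iff_nontrivial.1 hc
  have hcut := mul_card_le_two_mul_card_crossing hG (π := H.connectedComponentMk) Quot.mk_surjective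
  have hcrossing : {e ∈ G.edgeFinset | ¬ (e.map H.connectedComponentMk).IsDiag} ⊆
      (G.edgeFinset \ s) \ X ∪ s := fun e he ↦ by
    have heX : e ∉ X := fun heX ↦ (mem_filter.1 he).2 <| by
      induction e with | _ u w
      exact ConnectedComponent.sound (Adj.reachable (hXH heX))
    by_cases hes : e ∈ s <;> simp_all
  have hcard := (card_le_card hcrossing).trans (card_union_le _ _)
  -- `(k - 4) * (c - 2) ≥ 0` for the number `c` of components
  nlinarith

lemma two_mul_finrank_le_card_sdiff_add [Fintype V] (hk : 4 ≤ k) (hG : G.IsEdgeConnected k)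
    {s : Finset (Sym2 V)} (hs : #s + 2 ≤ k) {X : Finset (Sym2 V)} (hX : X ⊆ G.edgeFinset) :
    2 * (Set.range (G.incMatrix (ZMod 2)).col).finrank (ZMod 2) ≤
      #((G.edgeFinset \ s) \ X) + 2 * ((G.incMatrix (ZMod 2)).col '' X).finrank (ZMod 2) := by
  set H := SimpleGraph.fromEdgeSet (X : Set (Sym2 V)) with hH
  have hXG : (X : Set (Sym2 V)) ⊆ G.edgeSet := by simpa [← coe_subset] using hX
  have hHX : H.edgeSet = X := by
    rw [hH, edgeSet_fromEdgeSet, sdiff_eq_left]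
    exact Set.disjoint_left.2 fun e he ↦ G.not_isDiag_of_mem_edgeSet (hXG he)
  have hHG : H ≤ G := by rwa [← edgeSet_subset_edgeSet, hHX]
  have hcomponents := two_mul_card_connectedComponent_le hk hG hs hHX.ge
  have hrank := card_le_finrank_col_incMatrix_add_card_connectedComponent hHG
  have hrange := finrank_range_col_incMatrix_le G
  rw [hHX] at hrank
  lia

theorem exists_disjoint_spanning_edge_sets [Finite V] (hk : 4 ≤ k) (hG : G.IsEdgeConnected k)
    {s : Finset (Sym2 V)} (hs : #s + 2 ≤ k) :
    ∃ A B : Finset (Sym2 V), Disjoint A s ∧ Disjoint B s ∧ Disjoint A B ∧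
      SpansRange (ZMod 2) (G.incMatrix (ZMod 2)).col A ∧
      SpansRange (ZMod 2) (G.incMatrix (ZMod 2)).col B := by
  have := Fintype.ofFinite V
  obtain ⟨A, hA, B, hB, hAB, hspan⟩ := exists_disjoint_spansRange
    (G.incMatrix (ZMod 2)).col (G.edgeFinset \ s) fun X hX ↦
      two_mul_finrank_le_card_sdiff_add hk hG hs (hX.trans sdiff_subset)
  exact ⟨A, B, disjoint_sdiff_self_left.mono_left hA, disjoint_sdiff_self_left.mono_left hB, hAB,
    hspan⟩

end SpanningEdgeSets

theorem stmt_2_general {V : Type*} [Finite V] {G : SimpleGraph V} {k : ℕ} (hk : 4 ≤ k)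
    (hG : G.IsEdgeConnected k) {s : Finset (Sym2 V)} (hs : #s + 2 ≤ k)
    (τ : Sym2 V → ZMod 2 × ZMod 2) (hτ : ∀ a ∈ s, τ a ≠ 0) :
    ∃ θ : Sym2 V → ZMod 2 × ZMod 2, IsNowhereZeroFlow G θ ∧ ∀ a ∈ s, θ a = τ a := by
  classical
  have := Fintype.ofFinite V
  obtain ⟨A, B, hAs, hBs, hAB, hA, hB⟩ := exists_disjoint_spanning_edge_sets hk hG hs
  let target := s.piecewise τ 1
  obtain ⟨x, hxA, hx⟩ := hA.exists_mulVec_eq_zero fun a ↦ (target a).1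
  obtain ⟨y, hyB, hy⟩ := hB.exists_mulVec_eq_zero fun a ↦ (target a).2
  have hs_eq (a : Sym2 V) (ha : a ∈ s) : (x a, y a) = τ a := by
    rw [hxA a (disjoint_right.1 hAs ha), hyB a (disjoint_right.1 hBs ha)]
    simp [target, ha]
  refine ⟨fun a ↦ (x a, y a), ⟨fun a _ ↦ ?_, finsum_mem_incidenceSet_prodMk_eq_zero hx hy⟩, hs_eq⟩
  by_cases has : a ∈ s
  · exact (hs_eq a has).trans_ne (hτ a has)
  by_cases haA : a ∈ A
  · have hya : y a = 1 := by simp [hyB a (disjoint_left.1 hAB haA), target, has]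
    simp [hya]
  · have hxa : x a = 1 := by simp [hxA a haA, target, has]
    simp [hxa]

theorem stmt_2 {V : Type*} [Fintype V] (G : SimpleGraph V)
    (hG : EdgeConnGe G 4) (v : V) (e f : Sym2 V)
    (he : e ∈ G.incidenceSet v) (hf : f ∈ G.incidenceSet v) (hef : e ≠ f) :
    ∃ θ : Sym2 V → ZMod 2 × ZMod 2, IsNowhereZeroFlow G θ ∧ θ e ≠ θ f := by
  classical
  obtain ⟨θ, hθ, hval⟩ := stmt_2_general le_rfl hG.isEdgeConnected (s := {e, f})
    (Nat.add_le_add_right card_le_two 2) (fun a ↦ if a = e then (1, 0) else (0, 1))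
    fun a _ ↦ by split_ifs <;> simp
  exact ⟨θ, hθ, by simp [hval, hef.symm]⟩
end

section
/- Let G be a finite simple cubic graph containing the graph K as a subgraph, i.e., there exist five pairwise distinct vertices v1, v2, v3, v4, v5 of G such that v1v2, v1v3, v2v4, v2v5, v3v4, v3v5, v4v5 are all edges of G. Then in any normal edge-coloring of G (with any set of colors), all seven of these edges are rich. -/
open SimpleGraph

/-!
In a properly colored cubic graph every color set `S(v)` has three elements, so an edge `uv` is
poor exactly when `S(u) = S(v)`, and rich exactly when `S(u)` and `S(v)` share no color besides
that of `uv`. Hence one poor edge makes a whole triangle poor, and a poor edge of the diamond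
`v₂v₃v₄v₅` makes `S` constant on the diamond. Then `v₁v₂` and `v₁v₃` both carry the color of
`v₄v₅`, which is absurd since they meet at `v₁`. If instead `v₁v₂` is poor, the color of `v₁v₃`
recurs on `v₂v₄` or `v₂v₅`, which makes `v₃v₄` or `v₃v₅` poor.
-/

section ColorSet

variable {V C : Type*} {G : SimpleGraph V} {c : Sym2 V → C} {u v w x y z : V}

theorem colorSet_eq_image_neighborSet (G : SimpleGraph V) (c : Sym2 V → C) (v : V) :
    colorSet G c v = (fun w => c s(v, w)) '' G.neighborSet v := by
  ext k
  constructor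
  · rintro ⟨_, ⟨hadj, w, rfl⟩, rfl⟩
    exact ⟨w, hadj, rfl⟩
  · rintro ⟨w, hadj, rfl⟩
    exact ⟨s(v, w), ⟨hadj, Sym2.mem_mk_left v w⟩, rfl⟩

theorem color_mem_colorSet_left (c : Sym2 V → C) (h : G.Adj u v) :
    c s(u, v) ∈ colorSet G c u :=
  ⟨s(u, v), ⟨h, Sym2.mem_mk_left u v⟩, rfl⟩

theorem color_mem_colorSet_right (c : Sym2 V → C) (h : G.Adj u v) :
    c s(u, v) ∈ colorSet G c v :=
  ⟨s(u, v), ⟨h, Sym2.mem_mk_right u v⟩, rfl⟩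

theorem IsProperEdgeColoring.injOn_neighborSet (hc : IsProperEdgeColoring G c) (v : V) :
    Set.InjOn (fun w => c s(v, w)) (G.neighborSet v) := by
  intro x hx y hy hxy
  by_contra hne
  exact hc _ hx _ hy (fun h => hne (Sym2.congr_right.1 h))
    ⟨v, Sym2.mem_mk_left v x, Sym2.mem_mk_left v y⟩ hxy

theorem IsProperEdgeColoring.color_ne (hc : IsProperEdgeColoring G c) (hx : G.Adj v x)
    (hy : G.Adj v y) (hxy : x ≠ y) : c s(v, x) ≠ c s(v, y) :=
  (hc.injOn_neighborSet v).ne hx hy hxy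

theorem IsProperEdgeColoring.ncard_colorSet (hc : IsProperEdgeColoring G c) (v : V) :
    (colorSet G c v).ncard = (G.neighborSet v).ncard := by
  rw [colorSet_eq_image_neighborSet, (hc.injOn_neighborSet v).ncard_image]

theorem IsCubic.finite_colorSet (hG : IsCubic G) (c : Sym2 V → C) (v : V) :
    (colorSet G c v).Finite := by
  rw [colorSet_eq_image_neighborSet]
  exact (Set.finite_of_ncard_ne_zero (by simp [hG v])).image _

theorem IsCubic.neighborSet_eq (hG : IsCubic G) (hx : G.Adj v x) (hy : G.Adj v y)
    (hz : G.Adj v z) (hxy : x ≠ y) (hxz : x ≠ z) (hyz : y ≠ z) :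
    G.neighborSet v = {x, y, z} := by
  refine (Set.eq_of_subset_of_ncard_le ?_ ?_ ?_).symm
  · rintro _ (rfl | rfl | rfl) <;> assumption
  · rw [hG v, Set.ncard_eq_three.2 ⟨x, y, z, hxy, hxz, hyz, rfl⟩]
  · exact Set.finite_of_ncard_ne_zero (by simp [hG v])

theorem IsCubic.colorSet_eq (hG : IsCubic G) (c : Sym2 V → C) (hx : G.Adj v x) (hy : G.Adj v y)
    (hz : G.Adj v z) (hxy : x ≠ y) (hxz : x ≠ z) (hyz : y ≠ z) :
    colorSet G c v = {c s(v, x), c s(v, y), c s(v, z)} := by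
  rw [colorSet_eq_image_neighborSet, hG.neighborSet_eq hx hy hz hxy hxz hyz, Set.image_insert_eq,
    Set.image_pair]

theorem IsPoorAt.colorSet_eq (h : IsPoorAt G c u v) (hG : IsCubic G)
    (hc : IsProperEdgeColoring G c) : colorSet G c u = colorSet G c v := by
  have hfin : (colorSet G c u ∪ colorSet G c v).Finite :=
    (hG.finite_colorSet c u).union (hG.finite_colorSet c v)
  have eq_union (w : V) (hw : colorSet G c w ⊆ colorSet G c u ∪ colorSet G c v) :
      colorSet G c w = colorSet G c u ∪ colorSet G c v :=
    Set.eq_of_subset_of_ncard_le hw (by rw [h, hc.ncard_colorSet, hG w]) hfin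
  rw [eq_union u Set.subset_union_left, ← eq_union v Set.subset_union_right]

theorem IsRichAt.eq_color_of_mem_colorSet (h : IsRichAt G c u v) (hG : IsCubic G)
    (hc : IsProperEdgeColoring G c) (huv : G.Adj u v) {k : C} (hu : k ∈ colorSet G c u)
    (hv : k ∈ colorSet G c v) : k = c s(u, v) := by
  have hcard := Set.ncard_union_add_ncard_inter (colorSet G c u) (colorSet G c v)
    (hG.finite_colorSet c u) (hG.finite_colorSet c v)
  rw [h, hc.ncard_colorSet, hc.ncard_colorSet, hG u, hG v] at hcard
  have hinter : (colorSet G c u ∩ colorSet G c v).ncard ≤ 1 := by omega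
  exact (Set.ncard_le_one ((hG.finite_colorSet c u).inter_of_left _)).1 hinter k ⟨hu, hv⟩ _
    ⟨color_mem_colorSet_left c huv, color_mem_colorSet_right c huv⟩

theorem IsNormalEdgeColoring.isRichAt_of_colorSet_ne (hc : IsNormalEdgeColoring G c)
    (hG : IsCubic G) (huv : G.Adj u v) (hne : colorSet G c u ≠ colorSet G c v) :
    IsRichAt G c u v :=
  (hc.2 u v huv).resolve_left fun hpoor => hne (hpoor.colorSet_eq hG hc.1)

theorem IsNormalEdgeColoring.colorSet_eq_of_mem (hc : IsNormalEdgeColoring G c) (hG : IsCubic G)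
    (huv : G.Adj u v) {k : C} (hu : k ∈ colorSet G c u) (hv : k ∈ colorSet G c v)
    (hk : k ≠ c s(u, v)) : colorSet G c u = colorSet G c v := by
  by_contra hne
  have hrich := hc.isRichAt_of_colorSet_ne hG huv hne
  exact hk (hrich.eq_color_of_mem_colorSet hG hc.1 huv hu hv)

theorem IsNormalEdgeColoring.colorSet_eq_of_triangle (hc : IsNormalEdgeColoring G c)
    (hG : IsCubic G) (huv : G.Adj u v) (huw : G.Adj u w) (hvw : G.Adj v w)
    (h : colorSet G c u = colorSet G c v) : colorSet G c u = colorSet G c w := by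
  have hmem : c s(w, v) ∈ colorSet G c u := h ▸ color_mem_colorSet_right c hvw.symm
  have hne : c s(w, v) ≠ c s(u, w) := by
    rw [Sym2.eq_swap (a := u)]
    exact hc.1.color_ne hvw.symm huw.symm huv.ne'
  exact hc.colorSet_eq_of_mem hG huw hmem (color_mem_colorSet_left c hvw.symm) hne

theorem IsProperEdgeColoring.color_eq_of_triangle (hc : IsProperEdgeColoring G c)
    (hG : IsCubic G) (huv : G.Adj u v) (huw : G.Adj u w) (hvw : G.Adj v w) (hux : G.Adj u x)
    (hxv : x ≠ v) (hxw : x ≠ w) (h : colorSet G c u = colorSet G c v) :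
    c s(u, x) = c s(v, w) := by
  have hmem : c s(v, w) ∈ colorSet G c u := h ▸ color_mem_colorSet_left c hvw
  rw [hG.colorSet_eq c hux huv huw hxv hxw hvw.ne] at hmem
  rcases hmem with hx | hv | hw
  · exact hx.symm
  · rw [Sym2.eq_swap (a := u)] at hv
    exact absurd hv (hc.color_ne hvw huv.symm huw.ne')
  · rw [Set.mem_singleton_iff, Sym2.eq_swap (a := u), Sym2.eq_swap (a := v)] at hw
    exact absurd hw (hc.color_ne hvw.symm huw.symm huv.ne')

end ColorSet

/-- `v₁, …, v₅` span a copy in `G` of `K`, the graph `K₄` with one edge subdivided by `v₁`. Only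
the distinctness of the pairs of vertices not adjacent in `K` is recorded, since adjacent vertices
are distinct. -/
structure IsSubdividedK4 {V : Type*} (G : SimpleGraph V) (v₁ v₂ v₃ v₄ v₅ : V) : Prop where
  adj₁₂ : G.Adj v₁ v₂
  adj₁₃ : G.Adj v₁ v₃
  adj₂₄ : G.Adj v₂ v₄
  adj₂₅ : G.Adj v₂ v₅
  adj₃₄ : G.Adj v₃ v₄
  adj₃₅ : G.Adj v₃ v₅
  adj₄₅ : G.Adj v₄ v₅
  ne₁₄ : v₁ ≠ v₄
  ne₁₅ : v₁ ≠ v₅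
  ne₂₃ : v₂ ≠ v₃

namespace IsSubdividedK4

variable {V C : Type*} {G : SimpleGraph V} {c : Sym2 V → C} {v₁ v₂ v₃ v₄ v₅ : V}

theorem swap₂₃ (hK : IsSubdividedK4 G v₁ v₂ v₃ v₄ v₅) : IsSubdividedK4 G v₁ v₃ v₂ v₄ v₅ :=
  ⟨hK.adj₁₃, hK.adj₁₂, hK.adj₃₄, hK.adj₃₅, hK.adj₂₄, hK.adj₂₅, hK.adj₄₅,
    hK.ne₁₄, hK.ne₁₅, hK.ne₂₃.symm⟩

theorem swap₄₅ (hK : IsSubdividedK4 G v₁ v₂ v₃ v₄ v₅) : IsSubdividedK4 G v₁ v₂ v₃ v₅ v₄ :=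
  ⟨hK.adj₁₂, hK.adj₁₃, hK.adj₂₅, hK.adj₂₄, hK.adj₃₅, hK.adj₃₄, hK.adj₄₅.symm,
    hK.ne₁₅, hK.ne₁₄, hK.ne₂₃⟩

theorem color₁₂_eq_color₄₅ (hK : IsSubdividedK4 G v₁ v₂ v₃ v₄ v₅) (hG : IsCubic G)
    (hc : IsNormalEdgeColoring G c) (h : colorSet G c v₄ = colorSet G c v₅) :
    c s(v₁, v₂) = c s(v₄, v₅) := by
  have h24 : colorSet G c v₂ = colorSet G c v₄ :=
    (hc.colorSet_eq_of_triangle hG hK.adj₄₅ hK.adj₂₄.symm hK.adj₂₅.symm h).symm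
  rw [Sym2.eq_swap]
  exact hc.1.color_eq_of_triangle hG hK.adj₂₄ hK.adj₂₅ hK.adj₄₅ hK.adj₁₂.symm hK.ne₁₄ hK.ne₁₅ h24

theorem colorSet₄_ne_colorSet₅ (hK : IsSubdividedK4 G v₁ v₂ v₃ v₄ v₅) (hG : IsCubic G)
    (hc : IsNormalEdgeColoring G c) : colorSet G c v₄ ≠ colorSet G c v₅ := by
  intro h
  have h12 := hK.color₁₂_eq_color₄₅ hG hc h
  have h13 := hK.swap₂₃.color₁₂_eq_color₄₅ hG hc h
  exact hc.1.color_ne hK.adj₁₂ hK.adj₁₃ hK.ne₂₃ (h12.trans h13.symm)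

theorem colorSet₂_ne_colorSet₄ (hK : IsSubdividedK4 G v₁ v₂ v₃ v₄ v₅) (hG : IsCubic G)
    (hc : IsNormalEdgeColoring G c) : colorSet G c v₂ ≠ colorSet G c v₄ := by
  intro h
  have h25 := hc.colorSet_eq_of_triangle hG hK.adj₂₄ hK.adj₂₅ hK.adj₄₅ h
  exact hK.colorSet₄_ne_colorSet₅ hG hc (h.symm.trans h25)

theorem color₁₃_ne_color₂₄ (hK : IsSubdividedK4 G v₁ v₂ v₃ v₄ v₅) (hG : IsCubic G)
    (hc : IsNormalEdgeColoring G c) : c s(v₁, v₃) ≠ c s(v₂, v₄) := by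
  intro h
  have hmem : c s(v₂, v₄) ∈ colorSet G c v₃ := h ▸ color_mem_colorSet_right c hK.adj₁₃
  have hne : c s(v₂, v₄) ≠ c s(v₃, v₄) := by
    rw [Sym2.eq_swap (a := v₂), Sym2.eq_swap (a := v₃)]
    exact hc.1.color_ne hK.adj₂₄.symm hK.adj₃₄.symm hK.ne₂₃
  exact hK.swap₂₃.colorSet₂_ne_colorSet₄ hG hc
    (hc.colorSet_eq_of_mem hG hK.adj₃₄ hmem (color_mem_colorSet_right c hK.adj₂₄) hne)

theorem colorSet₁_ne_colorSet₂ (hK : IsSubdividedK4 G v₁ v₂ v₃ v₄ v₅) (hG : IsCubic G)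
    (hc : IsNormalEdgeColoring G c) : colorSet G c v₁ ≠ colorSet G c v₂ := by
  intro h
  have hmem : c s(v₁, v₃) ∈ colorSet G c v₂ := h ▸ color_mem_colorSet_left c hK.adj₁₃
  rw [hG.colorSet_eq c hK.adj₁₂.symm hK.adj₂₄ hK.adj₂₅ hK.ne₁₄ hK.ne₁₅ hK.adj₄₅.ne,
    Sym2.eq_swap (a := v₂) (b := v₁)] at hmem
  rcases hmem with h12 | h24 | h25
  · exact hc.1.color_ne hK.adj₁₃ hK.adj₁₂ hK.ne₂₃.symm h12
  · exact hK.color₁₃_ne_color₂₄ hG hc h24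
  · exact hK.swap₄₅.color₁₃_ne_color₂₄ hG hc h25

theorem isRichAt₁₂ (hK : IsSubdividedK4 G v₁ v₂ v₃ v₄ v₅) (hG : IsCubic G)
    (hc : IsNormalEdgeColoring G c) : IsRichAt G c v₁ v₂ :=
  hc.isRichAt_of_colorSet_ne hG hK.adj₁₂ (hK.colorSet₁_ne_colorSet₂ hG hc)

theorem isRichAt₂₄ (hK : IsSubdividedK4 G v₁ v₂ v₃ v₄ v₅) (hG : IsCubic G)
    (hc : IsNormalEdgeColoring G c) : IsRichAt G c v₂ v₄ :=
  hc.isRichAt_of_colorSet_ne hG hK.adj₂₄ (hK.colorSet₂_ne_colorSet₄ hG hc)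

theorem isRichAt₄₅ (hK : IsSubdividedK4 G v₁ v₂ v₃ v₄ v₅) (hG : IsCubic G)
    (hc : IsNormalEdgeColoring G c) : IsRichAt G c v₄ v₅ :=
  hc.isRichAt_of_colorSet_ne hG hK.adj₄₅ (hK.colorSet₄_ne_colorSet₅ hG hc)

end IsSubdividedK4

theorem stmt_4_general {V : Type*} (G : SimpleGraph V) (hG : IsCubic G)
    (v₁ v₂ v₃ v₄ v₅ : V) (hdist : ([v₁, v₂, v₃, v₄, v₅] : List V).Nodup)
    (h12 : G.Adj v₁ v₂) (h13 : G.Adj v₁ v₃) (h24 : G.Adj v₂ v₄) (h25 : G.Adj v₂ v₅)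
    (h34 : G.Adj v₃ v₄) (h35 : G.Adj v₃ v₅) (h45 : G.Adj v₄ v₅)
    {C : Type*} (c : Sym2 V → C) (hc : IsNormalEdgeColoring G c) :
    IsRichAt G c v₁ v₂ ∧ IsRichAt G c v₁ v₃ ∧ IsRichAt G c v₂ v₄ ∧ IsRichAt G c v₂ v₅ ∧
      IsRichAt G c v₃ v₄ ∧ IsRichAt G c v₃ v₅ ∧ IsRichAt G c v₄ v₅ := by
  have hK : IsSubdividedK4 G v₁ v₂ v₃ v₄ v₅ :=
    ⟨h12, h13, h24, h25, h34, h35, h45, by grind, by grind, by grind⟩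
  exact ⟨hK.isRichAt₁₂ hG hc, hK.swap₂₃.isRichAt₁₂ hG hc, hK.isRichAt₂₄ hG hc,
    hK.swap₄₅.isRichAt₂₄ hG hc, hK.swap₂₃.isRichAt₂₄ hG hc, hK.swap₂₃.swap₄₅.isRichAt₂₄ hG hc,
    hK.isRichAt₄₅ hG hc⟩

theorem stmt_4 {V : Type*} [Fintype V] (G : SimpleGraph V) (hG : IsCubic G)
    (v₁ v₂ v₃ v₄ v₅ : V) (hdist : ([v₁, v₂, v₃, v₄, v₅] : List V).Nodup)
    (h12 : G.Adj v₁ v₂) (h13 : G.Adj v₁ v₃) (h24 : G.Adj v₂ v₄) (h25 : G.Adj v₂ v₅)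
    (h34 : G.Adj v₃ v₄) (h35 : G.Adj v₃ v₅) (h45 : G.Adj v₄ v₅)
    {C : Type*} (c : Sym2 V → C) (hc : IsNormalEdgeColoring G c) :
    IsRichAt G c v₁ v₂ ∧ IsRichAt G c v₁ v₃ ∧ IsRichAt G c v₂ v₄ ∧ IsRichAt G c v₂ v₅ ∧
      IsRichAt G c v₃ v₄ ∧ IsRichAt G c v₃ v₅ ∧ IsRichAt G c v₄ v₅ :=
  stmt_4_general G hG v₁ v₂ v₃ v₄ v₅ hdist h12 h13 h24 h25 h34 h35 h45 c hc
end
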